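/- Let M_UPL be the submonoid of binary relations on the 28-element set H of major, minor, and augmented triads generated by the parsimonious relations U, P, L. Every monoid automorphism N of M_UPL satisfying N(L) = L and N(P) = P satisfies either N(U) = U or N(U) = P·U·P. -/

import Mathlib

/-- The 28-element set of the 24 major and minor triads and the 4 augmented triads:
`Sum.inl n` is the major triad `n_M`, `Sum.inr (Sum.inl n)` is the minor triad `n_m`,
and `Sum.inr (Sum.inr k)` is the augmented triad `k_aug`. -/
abbrev Htriads : Type := (ZMod 12) ⊕ (ZMod 12) ⊕ (ZMod 4)

/-- Binary relations on `Htriads`. -/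
abbrev MRel : Type := Htriads → Htriads → Prop

/-- The monoid of binary relations on `Htriads`: `r * s` relates `x` to `z` iff there is `y`
with `x r y` and `y s z` (i.e. first apply `r`, then `s`), and `1` is the equality relation. -/
instance : Monoid MRel where
  one := fun x y => x = y
  mul := fun r s => fun x z => ∃ y, r x y ∧ s y z
  mul_assoc r s t := by
    funext x z
    apply propext
    constructor
    · rintro ⟨y, ⟨w, hw1, hw2⟩, hy⟩
      exact ⟨w, hw1, y, hw2, hy⟩
    · rintro ⟨w, hw1, y, hy1, hy2⟩
      exact ⟨y, ⟨w, hw1, hy1⟩, hy2⟩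
  one_mul r := by
    funext x z
    apply propext
    constructor
    · rintro ⟨y, rfl, h⟩
      exact h
    · intro h
      exact ⟨x, rfl, h⟩
  mul_one r := by
    funext x z
    apply propext
    constructor
    · rintro ⟨y, h, rfl⟩
      exact h
    · intro h
      exact ⟨z, h, rfl⟩

/-- The major triad on root `n`. -/
def maj (n : ZMod 12) : Htriads := Sum.inl n
/-- The minor triad on root `n`. -/
def mino (n : ZMod 12) : Htriads := Sum.inr (Sum.inl n)
/-- The augmented triad `k_aug`, `k ∈ ℤ/4`. -/
def aug (k : ZMod 4) : Htriads := Sum.inr (Sum.inr k)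

/-- Reduction mod 4 of a pitch class mod 12. -/
def m4 (n : ZMod 12) : ZMod 4 := ZMod.castHom (show (4:ℕ) ∣ 12 by norm_num) (ZMod 4) n

/-- The relation `𝒰`: the symmetric relation relating exactly `n_M` with `(n mod 4)_aug`
and `n_m` with `((n+3) mod 4)_aug`. -/
def Urel : MRel := fun x y =>
  (∃ n : ZMod 12, x = maj n ∧ y = aug (m4 n)) ∨
  (∃ n : ZMod 12, x = aug (m4 n) ∧ y = maj n) ∨
  (∃ n : ZMod 12, x = mino n ∧ y = aug (m4 (n + 3))) ∨
  (∃ n : ZMod 12, x = aug (m4 (n + 3)) ∧ y = mino n)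

/-- The relation `𝒫`: the symmetric relation relating exactly `n_M` with `n_m`,
and each augmented triad with itself. -/
def Prel : MRel := fun x y =>
  (∃ n : ZMod 12, x = maj n ∧ y = mino n) ∨
  (∃ n : ZMod 12, x = mino n ∧ y = maj n) ∨
  (∃ k : ZMod 4, x = aug k ∧ y = aug k)

/-- The relation `ℒ`: the symmetric relation relating exactly `n_M` with `(n+4)_m`,
and each augmented triad with itself. -/
def Lrel : MRel := fun x y =>
  (∃ n : ZMod 12, x = maj n ∧ y = mino (n + 4)) ∨
  (∃ n : ZMod 12, x = mino (n + 4) ∧ y = maj n) ∨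
  (∃ k : ZMod 4, x = aug k ∧ y = aug k)

/-- Douthett's parsimonious relation `𝒮 = P_{1,0}` on major, minor and augmented triads. -/
def Srel : MRel := fun x y =>
  (∃ n : ZMod 12, x = maj n ∧ y = mino n) ∨
  (∃ n : ZMod 12, x = mino n ∧ y = maj n) ∨
  (∃ n : ZMod 12, x = maj n ∧ y = mino (n + 4)) ∨
  (∃ n : ZMod 12, x = mino (n + 4) ∧ y = maj n) ∨
  (∃ n : ZMod 12, x = maj n ∧ y = aug (m4 n)) ∨
  (∃ n : ZMod 12, x = aug (m4 n) ∧ y = maj n) ∨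
  (∃ n : ZMod 12, x = mino n ∧ y = aug (m4 (n + 3))) ∨
  (∃ n : ZMod 12, x = aug (m4 (n + 3)) ∧ y = mino n)

/-- Douthett's parsimonious relation `𝒯 = P_{2,0}` on major, minor and augmented triads. -/
def Trel : MRel := fun x y =>
  (∃ n : ZMod 12, x = maj n ∧ y = maj (n + 4)) ∨
  (∃ n : ZMod 12, x = maj n ∧ y = maj (n + 8)) ∨
  (∃ n : ZMod 12, x = maj n ∧ y = mino (n + 1)) ∨
  (∃ n : ZMod 12, x = mino (n + 1) ∧ y = maj n) ∨
  (∃ n : ZMod 12, x = maj n ∧ y = mino (n + 5)) ∨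
  (∃ n : ZMod 12, x = mino (n + 5) ∧ y = maj n) ∨
  (∃ n : ZMod 12, x = maj n ∧ y = aug (m4 (n + 3))) ∨
  (∃ n : ZMod 12, x = aug (m4 (n + 3)) ∧ y = maj n) ∨
  (∃ n : ZMod 12, x = mino n ∧ y = mino (n + 4)) ∨
  (∃ n : ZMod 12, x = mino n ∧ y = mino (n + 8)) ∨
  (∃ n : ZMod 12, x = mino n ∧ y = aug (m4 n)) ∨
  (∃ n : ZMod 12, x = aug (m4 n) ∧ y = mino n)

/-- The submonoid `M_UPL` of relations on `Htriads` generated by `{U, P, L}`. -/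
def MUPL : Submonoid MRel := Submonoid.closure {Urel, Prel, Lrel}

lemma Urel_mem : Urel ∈ MUPL := Submonoid.subset_closure (Set.mem_insert _ _)
lemma Prel_mem : Prel ∈ MUPL :=
  Submonoid.subset_closure (Set.mem_insert_of_mem _ (Set.mem_insert _ _))
lemma Lrel_mem : Lrel ∈ MUPL :=
  Submonoid.subset_closure (Set.mem_insert_of_mem _ (Set.mem_insert_of_mem _ rfl))

/-!
Every word in `𝒰, 𝒫, ℒ` is a word in `𝒫, ℒ` alone, hence invertible, or of the form `e * v * f` with
`e, f ∈ {1, 𝒫}` and `v ∈ {𝒰, 𝒰²}`, or it has the factor `𝒰𝒫𝒰`; this only uses `𝒫² = ℒ² = 1`,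
`ℒ𝒰 = 𝒫𝒰`, `𝒰ℒ = 𝒰𝒫` and `𝒰³ = 𝒰`. The relation `𝒰` itself does not have the factor `𝒰𝒫𝒰`: all the
relations of `M_UPL` commute with transposition by a whole tone, and `𝒰𝒫𝒰` relates some triad both
to a triad and to its transpose, a property inherited by all multiples but not shared by `𝒰`.

If `N` is an automorphism, then `N 𝒰` and `𝒰` are factors of each other, since the non-invertible
elements are exactly those having the factor `𝒰`. So `N 𝒰 = e * v * f` as above; now
`(N 𝒰)³ = N 𝒰` forces `e = f`, and if `v = 𝒰²` then `N 𝒰`, hence `𝒰`, is idempotent, so `v = 𝒰`.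
-/

section Factor

variable {M : Type*} [Monoid M] {x y z : M}

/-- `y` is a factor of `x` if `x` lies in the principal two-sided ideal `M y M`, that is, if `x`
is below `y` in Green's `𝒥`-preorder. -/
def IsFactor (y x : M) : Prop := ∃ a b, x = a * y * b

theorem IsFactor.refl (x : M) : IsFactor x x := ⟨1, 1, by simp⟩

theorem IsFactor.trans (hxy : IsFactor x y) (hyz : IsFactor y z) : IsFactor x z := by
  obtain ⟨a, b, rfl⟩ := hxy
  obtain ⟨c, d, rfl⟩ := hyz
  exact ⟨c * a, b * d, by simp only [mul_assoc]⟩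

theorem IsFactor.mul_left (a : M) (h : IsFactor y x) : IsFactor y (a * x) :=
  h.trans ⟨a, 1, by simp⟩

theorem IsFactor.mul_right (h : IsFactor y x) (b : M) : IsFactor y (x * b) :=
  h.trans ⟨1, b, by simp⟩

theorem IsFactor.of_isUnit (hy : IsUnit y) (x : M) : IsFactor y x := by
  obtain ⟨y, rfl⟩ := hy
  exact ⟨x * ↑y⁻¹, 1, by simp⟩

theorem IsFactor.map {M' F : Type*} [Monoid M'] [FunLike F M M'] [MonoidHomClass F M M'] (f : F)
    (h : IsFactor y x) : IsFactor (f y) (f x) := by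
  obtain ⟨a, b, rfl⟩ := h
  exact ⟨f a, f b, by simp only [map_mul]⟩

end Factor

section UPLTriple

variable {M : Type*} [Monoid M] {u p l x : M}

/-- Generators `u, p, l` of a monoid satisfying the relations between `𝒰`, `𝒫` and `ℒ` on which the
classification of the elements of `M_UPL` rests. -/
structure IsUPLTriple (u p l : M) : Prop where
  closure_eq_top : Submonoid.closure {u, p, l} = ⊤
  p_mul_p : p * p = 1
  l_mul_l : l * l = 1
  l_mul_u : l * u = p * u
  u_mul_l : u * l = u * p
  u_mul_u_mul_u : u * u * u = u

/-- The elements `e * v * f` with `e, f ∈ {1, p}` and `v ∈ {u, u²}`. For `𝒰` and `𝒫` in `M_UPL` this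
is the `𝒥`-class of `𝒰`. -/
def uClass (u p : M) : Set M :=
  {x | ∃ e ∈ ({1, p} : Set M), ∃ v ∈ ({u, u * u} : Set M), ∃ f ∈ ({1, p} : Set M), x = e * v * f}

theorem isFactor_of_mem_uClass (hx : x ∈ uClass u p) : IsFactor u x := by
  obtain ⟨e, -, v, rfl | rfl, f, -, rfl⟩ := hx
  · exact ⟨e, f, rfl⟩
  · exact ⟨e * u, f, by simp only [mul_assoc]⟩

theorem isFactor_mul_p_mul {v w : M} (hv : v ∈ ({u, u * u} : Set M))
    (hw : w ∈ ({u, u * u} : Set M)) : IsFactor (u * p * u) (v * p * w) := by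
  obtain ⟨a, rfl⟩ : ∃ a, v = a * u := by
    rcases hv with rfl | rfl
    exacts [⟨1, (one_mul _).symm⟩, ⟨_, rfl⟩]
  obtain ⟨b, rfl⟩ : ∃ b, w = u * b := by
    rcases hw with rfl | rfl
    exacts [⟨1, (mul_one _).symm⟩, ⟨_, rfl⟩]
  exact ⟨a, b, by simp only [mul_assoc]⟩

-- For `e ≠ f` the cube of `e * v * f` contains `v * p * v`.
theorem eq_mul_mul_of_mem_uClass (hx : x ∈ uClass u p) (cube : x * x * x = x)
    (hx' : ¬IsFactor (u * p * u) x) :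
    ∃ e ∈ ({1, p} : Set M), ∃ v ∈ ({u, u * u} : Set M), x = e * v * e := by
  obtain ⟨e, he, v, hv, f, hf, rfl⟩ := hx
  suffices e = f by exact ⟨e, he, v, hv, by rw [this]⟩
  by_contra hef
  have f_mul_e : f * e = p := by
    rcases he with rfl | rfl <;> rcases hf with rfl | rfl <;> simp_all
  have factor : IsFactor (v * p * v) (e * v * f) := by
    refine ⟨e, f * (e * v * f), ?_⟩
    rw [← f_mul_e]
    simpa only [mul_assoc] using cube.symm
  exact hx' ((isFactor_mul_p_mul hv hv).trans factor)

namespace IsUPLTriple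

variable (h : IsUPLTriple u p l)
include h

theorem mul_self_eq_one {e : M} (he : e ∈ ({1, p} : Set M)) : e * e = 1 := by
  rcases he with rfl | rfl
  exacts [mul_one 1, h.p_mul_p]

theorem isUnit_p : IsUnit p := ⟨⟨p, p, h.p_mul_p, h.p_mul_p⟩, rfl⟩

theorem isUnit_of_mem_closure (hx : x ∈ Submonoid.closure {p, l}) : IsUnit x := by
  suffices Submonoid.closure {p, l} ≤ IsUnit.submonoid M from this hx
  rw [Submonoid.closure_le, Set.pair_subset_iff]
  exact ⟨h.isUnit_p, ⟨⟨l, l, h.l_mul_l, h.l_mul_l⟩, rfl⟩⟩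

theorem u_mul_of_mem_closure (hx : x ∈ Submonoid.closure {p, l}) :
    ∃ f ∈ ({1, p} : Set M), u * x = u * f := by
  induction hx using Submonoid.closure_induction_right with
  | one => exact ⟨1, .inl rfl, rfl⟩
  | mul_right x _ g hg ih =>
    have u_mul_g : u * g = u * p := by
      rcases hg with rfl | rfl
      exacts [rfl, h.u_mul_l]
    have u_mul_p_mul_g : u * p * g = u := by
      rcases hg with rfl | rfl
      · rw [mul_assoc, h.p_mul_p, mul_one]
      · rw [← h.u_mul_l, mul_assoc, h.l_mul_l, mul_one]
    obtain ⟨f, rfl | rfl, hf⟩ := ih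
    · exact ⟨p, .inr rfl, by rw [← mul_assoc, hf, mul_one, u_mul_g]⟩
    · exact ⟨1, .inl rfl, by rw [← mul_assoc, hf, u_mul_p_mul_g, mul_one]⟩

theorem p_mul_mem_uClass (hx : x ∈ uClass u p) : p * x ∈ uClass u p := by
  obtain ⟨e, rfl | rfl, v, hv, f, hf, rfl⟩ := hx
  · exact ⟨p, .inr rfl, v, hv, f, hf, by simp only [one_mul, mul_assoc]⟩
  · exact ⟨1, .inl rfl, v, hv, f, hf, by simp only [← mul_assoc, h.p_mul_p]⟩

theorem l_mul_eq_p_mul (hx : x ∈ uClass u p) : l * x = p * x := by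
  obtain ⟨e, he, v, hv, f, -, rfl⟩ := hx
  obtain ⟨w, rfl⟩ : ∃ w, v = u * w := by
    rcases hv with rfl | rfl
    exacts [⟨1, (mul_one _).symm⟩, ⟨_, rfl⟩]
  have l_mul_p_mul_u : l * (p * u) = u := by rw [← h.l_mul_u, ← mul_assoc, h.l_mul_l, one_mul]
  have l_mul_e_mul_u : l * (e * u) = p * (e * u) := by
    rcases he with rfl | rfl
    · rw [one_mul, h.l_mul_u]
    · rw [l_mul_p_mul_u, ← mul_assoc, h.p_mul_p, one_mul]
  simp only [← mul_assoc] at l_mul_e_mul_u ⊢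
  rw [l_mul_e_mul_u]

theorem u_mul_mem_uClass_or_isFactor (hx : x ∈ uClass u p) :
    u * x ∈ uClass u p ∨ IsFactor (u * p * u) (u * x) := by
  obtain ⟨e, rfl | rfl, v, hv, f, hf, rfl⟩ := hx
  · have u_mul_v : u * v ∈ ({u, u * u} : Set M) := by
      rcases hv with rfl | rfl
      exacts [.inr rfl, .inl (by rw [← mul_assoc, h.u_mul_u_mul_u])]
    exact .inl ⟨1, .inl rfl, u * v, u_mul_v, f, hf, by simp only [one_mul, mul_assoc]⟩
  · have factor : IsFactor (u * e * u) (u * e * v) := isFactor_mul_p_mul (.inl rfl) hv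
    exact .inr (by simpa only [mul_assoc] using factor.mul_right f)

theorem mem_closure_or_mem_uClass_or_isFactor (x : M) :
    x ∈ Submonoid.closure {p, l} ∨ x ∈ uClass u p ∨ IsFactor (u * p * u) x := by
  have hx : x ∈ Submonoid.closure {u, p, l} := h.closure_eq_top ▸ Submonoid.mem_top x
  induction hx using Submonoid.closure_induction_left with
  | one => exact .inl (one_mem _)
  | mul_left g hg y _ ih =>
    rcases ih with hy | hy | hy
    · rcases hg with rfl | hg
      · obtain ⟨f, hf, hyf⟩ := h.u_mul_of_mem_closure hy
        exact .inr (.inl ⟨1, .inl rfl, g, .inl rfl, f, hf, by rw [hyf, one_mul]⟩)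
      · exact .inl (mul_mem (Submonoid.subset_closure hg) hy)
    · rcases hg with rfl | rfl | rfl
      · exact .inr (h.u_mul_mem_uClass_or_isFactor hy)
      · exact .inr (.inl (h.p_mul_mem_uClass hy))
      · exact .inr (.inl (h.l_mul_eq_p_mul hy ▸ h.p_mul_mem_uClass hy))
    · exact .inr (.inr (hy.mul_left g))

theorem isUnit_or_isFactor (x : M) : IsUnit x ∨ IsFactor u x := by
  rcases h.mem_closure_or_mem_uClass_or_isFactor x with hx | hx | hx
  · exact .inl (h.isUnit_of_mem_closure hx)
  · exact .inr (isFactor_of_mem_uClass hx)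
  · exact .inr (((IsFactor.refl u).mul_left (u * p)).trans hx)

theorem not_isUnit_u (hu : ¬IsFactor (u * p * u) u) : ¬IsUnit u := fun u_unit =>
  hu (.of_isUnit ((u_unit.mul h.isUnit_p).mul u_unit) u)

theorem isFactor_map_u (hu : ¬IsUnit u) (N : M ≃* M) : IsFactor (N u) u := by
  have symm_not_isUnit : ¬IsUnit (N.symm u) := by rwa [MulEquiv.isUnit_map]
  simpa using ((h.isUnit_or_isFactor _).resolve_left symm_not_isUnit).map N

theorem map_u (hu : ¬IsFactor (u * p * u) u) (N : M ≃* M) : N u = u ∨ N u = p * u * p := by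
  have not_factor : ¬IsFactor (u * p * u) (N u) := fun hN =>
    hu (hN.trans (h.isFactor_map_u (h.not_isUnit_u hu) N))
  have not_unit : ¬IsUnit (N u) := by rw [MulEquiv.isUnit_map]; exact h.not_isUnit_u hu
  have mem_uClass : N u ∈ uClass u p :=
    ((h.mem_closure_or_mem_uClass_or_isFactor _).resolve_left
      (not_unit ∘ h.isUnit_of_mem_closure)).resolve_right not_factor
  have cube : N u * N u * N u = N u := by rw [← map_mul, ← map_mul, h.u_mul_u_mul_u]
  obtain ⟨e, he, v, hv, hN⟩ := eq_mul_mul_of_mem_uClass mem_uClass cube not_factor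
  have v_eq_u : v = u := by
    rcases hv with rfl | rfl
    · rfl
    · have idem : N u * N u = N u := by
        calc N u * N u = e * (u * u) * (e * e) * (u * u) * e := by rw [hN]; simp only [mul_assoc]
          _ = e * (u * u * u * u) * e := by
            rw [h.mul_self_eq_one he, mul_one]; simp only [mul_assoc]
          _ = N u := by rw [h.u_mul_u_mul_u, hN]
      exact N.injective (by rw [map_mul, idem])
  subst v_eq_u
  rcases he with rfl | rfl
  · exact .inl (by simpa using hN)
  · exact .inr hN

end IsUPLTriple

end UPLTriple

section Triads

@[elab_as_elim]
theorem triad_cases {motive : Htriads → Prop} (maj : ∀ n, motive (maj n))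
    (mino : ∀ n, motive (mino n)) (aug : ∀ k, motive (aug k)) : ∀ x, motive x
  | .inl n => maj n
  | .inr (.inl n) => mino n
  | .inr (.inr k) => aug k

/-- The involution of the set of triads whose graph is `𝒫`. -/
def parallel : Htriads → Htriads
  | .inl n => mino n
  | .inr (.inl n) => maj n
  | .inr (.inr k) => aug k

/-- The involution of the set of triads whose graph is `ℒ`. -/
def leadingTone : Htriads → Htriads
  | .inl n => mino (n + 4)
  | .inr (.inl n) => maj (n - 4)
  | .inr (.inr k) => aug k

/-- The index of the augmented triad that is `𝒰`-related to, or equal to, the given triad. -/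
def hub : Htriads → ZMod 4
  | .inl n => m4 n
  | .inr (.inl n) => m4 (n + 3)
  | .inr (.inr k) => k

/-- Whether a triad is augmented. -/
def isAug : Htriads → Bool
  | .inr (.inr _) => true
  | _ => false

/-- Transposition by a whole tone. -/
def wholeTone : Htriads → Htriads
  | .inl n => maj (n + 2)
  | .inr (.inl n) => mino (n + 2)
  | .inr (.inr k) => aug (k + 2)

theorem parallel_involutive : Function.Involutive parallel := fun x => by
  cases x using triad_cases <;> rfl

theorem leadingTone_involutive : Function.Involutive leadingTone := fun x => by
  cases x using triad_cases <;> simp [leadingTone, maj, mino, aug]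

theorem isAug_parallel (x : Htriads) : isAug (parallel x) = isAug x := by
  cases x using triad_cases <;> rfl

theorem isAug_leadingTone (x : Htriads) : isAug (leadingTone x) = isAug x := by
  cases x using triad_cases <;> rfl

theorem isAug_wholeTone (x : Htriads) : isAug (wholeTone x) = isAug x := by
  cases x using triad_cases <;> rfl

theorem m4_surjective : Function.Surjective m4 := ZMod.castHom_surjective _

theorem m4_add_four (n : ZMod 12) : m4 (n + 4) = m4 n := by
  have four : m4 4 = 0 := rfl
  simpa [m4] using four

theorem hub_leadingTone (x : Htriads) : hub (leadingTone x) = hub (parallel x) := by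
  cases x using triad_cases with
  | maj n =>
    calc m4 (n + 4 + 3) = m4 (n + 3 + 4) := by rw [add_right_comm]
      _ = m4 (n + 3) := m4_add_four _
  | mino n =>
    calc m4 (n - 4) = m4 (n - 4 + 4) := (m4_add_four _).symm
      _ = m4 n := by rw [sub_add_cancel]
  | aug k => rfl

theorem hub_wholeTone (x : Htriads) : hub (wholeTone x) = hub x + 2 := by
  have m4_add_two (n : ZMod 12) : m4 (n + 2) = m4 n + 2 := map_add _ n 2
  cases x using triad_cases with
  | maj n => exact m4_add_two n
  | mino n => exact (congrArg m4 (add_right_comm n 2 3)).trans (m4_add_two _)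
  | aug k => rfl

theorem parallel_wholeTone (x : Htriads) : parallel (wholeTone x) = wholeTone (parallel x) := by
  cases x using triad_cases <;> rfl

theorem leadingTone_wholeTone (x : Htriads) :
    leadingTone (wholeTone x) = wholeTone (leadingTone x) := by
  cases x using triad_cases with
  | maj n => exact congrArg mino (add_right_comm n 2 4)
  | mino n => exact congrArg maj (add_sub_right_comm n 2 4)
  | aug k => rfl

theorem exists_hub_eq_isAug_eq (k : ZMod 4) (b : Bool) : ∃ x, hub x = k ∧ isAug x = b := by
  cases b with
  | true => exact ⟨aug k, rfl, rfl⟩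
  | false =>
    obtain ⟨n, hn⟩ := m4_surjective k
    exact ⟨maj n, hn, rfl⟩

end Triads

section Relations

variable {r s : MRel} {x y z : Htriads}

theorem mul_rel : (r * s) x z ↔ ∃ y, r x y ∧ s y z := Iff.rfl

theorem one_rel : (1 : MRel) x y ↔ x = y := Iff.rfl

theorem MRel.ext (h : ∀ x y, r x y ↔ s x y) : r = s := by
  funext x y
  exact propext (h x y)

theorem Prel_iff : Prel x y ↔ parallel x = y := by
  cases x using triad_cases <;> cases y using triad_cases <;>
    simp [Prel, parallel, maj, mino, aug, eq_comm]

theorem Lrel_iff : Lrel x y ↔ leadingTone x = y := by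
  cases x using triad_cases <;> cases y using triad_cases <;>
    simp [Lrel, leadingTone, maj, mino, aug, eq_comm, eq_sub_iff_add_eq]

theorem Urel_iff : Urel x y ↔ hub x = hub y ∧ isAug x ≠ isAug y := by
  cases x using triad_cases <;> cases y using triad_cases <;>
    simp [Urel, hub, isAug, maj, mino, aug, eq_comm]

theorem Prel_mul_rel : (Prel * r) x z ↔ r (parallel x) z := by
  simp only [mul_rel, Prel_iff, exists_eq_left']

theorem Lrel_mul_rel : (Lrel * r) x z ↔ r (leadingTone x) z := by
  simp only [mul_rel, Lrel_iff, exists_eq_left']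

theorem mul_Prel_rel : (r * Prel) x z ↔ r x (parallel z) := by
  simp only [mul_rel, Prel_iff, parallel_involutive.eq_iff, exists_eq_right]

theorem mul_Lrel_rel : (r * Lrel) x z ↔ r x (leadingTone z) := by
  simp only [mul_rel, Lrel_iff, leadingTone_involutive.eq_iff, exists_eq_right]

theorem Prel_mul_Prel : Prel * Prel = 1 :=
  MRel.ext fun x y => by rw [Prel_mul_rel, Prel_iff, parallel_involutive, one_rel]

theorem Lrel_mul_Lrel : Lrel * Lrel = 1 :=
  MRel.ext fun x y => by rw [Lrel_mul_rel, Lrel_iff, leadingTone_involutive, one_rel]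

theorem Lrel_mul_Urel : Lrel * Urel = Prel * Urel :=
  MRel.ext fun x y => by
    rw [Lrel_mul_rel, Prel_mul_rel, Urel_iff, Urel_iff, hub_leadingTone, isAug_leadingTone,
      isAug_parallel]

theorem Urel_mul_Lrel : Urel * Lrel = Urel * Prel :=
  MRel.ext fun x y => by
    rw [mul_Lrel_rel, mul_Prel_rel, Urel_iff, Urel_iff, hub_leadingTone, isAug_leadingTone,
      isAug_parallel]

theorem Urel_mul_Urel_rel : (Urel * Urel) x z ↔ hub x = hub z ∧ isAug x = isAug z := by
  simp only [mul_rel, Urel_iff]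
  constructor
  · rintro ⟨y, ⟨hxy, axy⟩, hyz, ayz⟩
    exact ⟨hxy.trans hyz, by rw [Bool.eq_not.2 axy, Bool.eq_not.2 ayz, Bool.not_not]⟩
  · rintro ⟨hub_eq, aug_eq⟩
    obtain ⟨y, hy, ay⟩ := exists_hub_eq_isAug_eq (hub x) (!isAug x)
    exact ⟨y, ⟨hy.symm, by simp [ay]⟩, hy.trans hub_eq, by simp [ay, aug_eq]⟩

theorem Urel_mul_Urel_mul_Urel : Urel * Urel * Urel = Urel :=
  MRel.ext fun x z => by
    simp only [mul_rel (r := Urel * Urel), Urel_mul_Urel_rel, Urel_iff]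
    constructor
    · rintro ⟨y, ⟨hxy, axy⟩, hyz, ayz⟩
      exact ⟨hxy.trans hyz, axy ▸ ayz⟩
    · exact fun hxz => ⟨x, ⟨rfl, rfl⟩, hxz⟩

theorem isUPLTriple_MUPL :
    IsUPLTriple (M := MUPL) ⟨Urel, Urel_mem⟩ ⟨Prel, Prel_mem⟩ ⟨Lrel, Lrel_mem⟩ where
  closure_eq_top := by
    have preimage_eq : ((↑) : MUPL → MRel) ⁻¹' {Urel, Prel, Lrel} =
        {⟨Urel, Urel_mem⟩, ⟨Prel, Prel_mem⟩, ⟨Lrel, Lrel_mem⟩} := by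
      ext x
      simp [Subtype.ext_iff]
    exact preimage_eq ▸ Submonoid.closure_closure_coe_preimage
  p_mul_p := Subtype.ext Prel_mul_Prel
  l_mul_l := Subtype.ext Lrel_mul_Lrel
  l_mul_u := Subtype.ext Lrel_mul_Urel
  u_mul_l := Subtype.ext Urel_mul_Lrel
  u_mul_u_mul_u := Subtype.ext Urel_mul_Urel_mul_Urel

/-- The relations that are total in both directions and commute with transposition by a whole
tone. -/
def equivariantRelations : Submonoid MRel where
  carrier := {r | Relator.BiTotal r ∧ ∀ x y, r x y → r (wholeTone x) (wholeTone y)}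
  one_mem' := ⟨Relator.bi_total_eq, fun _ _ => congrArg wholeTone⟩
  mul_mem' := by
    rintro r s ⟨⟨left_r, right_r⟩, hr⟩ ⟨⟨left_s, right_s⟩, hs⟩
    refine ⟨⟨fun x => ?_, fun z => ?_⟩, ?_⟩
    · obtain ⟨y, hxy⟩ := left_r x
      obtain ⟨z, hyz⟩ := left_s y
      exact ⟨z, y, hxy, hyz⟩
    · obtain ⟨y, hyz⟩ := right_s z
      obtain ⟨x, hxy⟩ := right_r y
      exact ⟨x, y, hxy, hyz⟩
    · rintro x z ⟨y, hxy, hyz⟩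
      exact ⟨wholeTone y, hr x y hxy, hs y z hyz⟩

theorem Urel_mem_equivariantRelations : Urel ∈ equivariantRelations := by
  have exists_rel (x : Htriads) : ∃ y, hub y = hub x ∧ isAug y = !isAug x :=
    exists_hub_eq_isAug_eq _ _
  refine ⟨⟨fun x => ?_, fun y => ?_⟩, fun x y hxy => ?_⟩
  · obtain ⟨y, hy, ay⟩ := exists_rel x
    exact ⟨y, Urel_iff.2 ⟨hy.symm, by simp [ay]⟩⟩
  · obtain ⟨x, hx, ax⟩ := exists_rel y
    exact ⟨x, Urel_iff.2 ⟨hx, by simp [ax]⟩⟩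
  · simpa only [Urel_iff, hub_wholeTone, isAug_wholeTone, add_left_inj] using hxy

theorem Prel_mem_equivariantRelations : Prel ∈ equivariantRelations := by
  refine ⟨⟨fun x => ⟨_, Prel_iff.2 rfl⟩, fun y => ⟨_, Prel_iff.2 (parallel_involutive y)⟩⟩, ?_⟩
  intro x y hxy
  rw [Prel_iff] at hxy ⊢
  rw [parallel_wholeTone, hxy]

theorem Lrel_mem_equivariantRelations : Lrel ∈ equivariantRelations := by
  refine ⟨⟨fun x => ⟨_, Lrel_iff.2 rfl⟩, fun y => ⟨_, Lrel_iff.2 (leadingTone_involutive y)⟩⟩, ?_⟩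
  intro x y hxy
  rw [Lrel_iff] at hxy ⊢
  rw [leadingTone_wholeTone, hxy]

theorem MUPL_le_equivariantRelations : MUPL ≤ equivariantRelations := by
  rw [MUPL, Submonoid.closure_le]
  rintro r (rfl | rfl | rfl)
  exacts [Urel_mem_equivariantRelations, Prel_mem_equivariantRelations,
    Lrel_mem_equivariantRelations]

/-- A relation spreads if it relates some triad both to a triad `y` and to the transpose of `y` by
a whole tone. -/
def Spreads (r : MRel) : Prop := ∃ x y, r x y ∧ r x (wholeTone y)

theorem Spreads.mul_left (hr : Spreads r) (hs : Relator.RightTotal s) : Spreads (s * r) := by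
  obtain ⟨x, y, hxy, hxy'⟩ := hr
  obtain ⟨w, hwx⟩ := hs x
  exact ⟨w, y, ⟨x, hwx, hxy⟩, ⟨x, hwx, hxy'⟩⟩

theorem Spreads.mul_right (hr : Spreads r) (hs : s ∈ equivariantRelations) : Spreads (r * s) := by
  obtain ⟨x, y, hxy, hxy'⟩ := hr
  obtain ⟨z, hyz⟩ := hs.1.1 y
  exact ⟨x, z, ⟨y, hxy, hyz⟩, ⟨wholeTone y, hxy', hs.2 y z hyz⟩⟩

-- The two paths are `aug 1, maj 1, mino 1, aug 0` and `aug 1, mino 2, maj 2, aug 2`.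
theorem spreads_Urel_mul_Prel_mul_Urel : Spreads (Urel * Prel * Urel) := by
  refine ⟨aug 1, aug 0, ⟨mino 1, mul_Prel_rel.2 ?_, ?_⟩, ⟨maj 2, mul_Prel_rel.2 ?_, ?_⟩⟩ <;>
    exact Urel_iff.2 ⟨rfl, Bool.noConfusion⟩

theorem not_spreads_Urel : ¬Spreads Urel := by
  rintro ⟨x, y, hxy, hxy'⟩
  have hub_eq : hub y = hub y + 2 := by
    rw [← hub_wholeTone, ← (Urel_iff.1 hxy).1, (Urel_iff.1 hxy').1]
  exact absurd (left_eq_add.1 hub_eq) (by decide)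

theorem not_isFactor_Urel_mul_Prel_mul_Urel :
    ¬IsFactor (M := MUPL) (⟨Urel, Urel_mem⟩ * ⟨Prel, Prel_mem⟩ * ⟨Urel, Urel_mem⟩)
      ⟨Urel, Urel_mem⟩ := by
  rintro ⟨a, b, hab⟩
  have ha := MUPL_le_equivariantRelations a.2
  have hb := MUPL_le_equivariantRelations b.2
  have Urel_eq : Urel = a * (Urel * Prel * Urel) * b := congrArg Subtype.val hab
  apply not_spreads_Urel
  rw [Urel_eq]
  exact (spreads_Urel_mul_Prel_mul_Urel.mul_left ha.1.2).mul_right hb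

end Relations

theorem stmt9_general (N : MulAut MUPL) :
    (N ⟨Urel, Urel_mem⟩ : MRel) = Urel ∨
    (N ⟨Urel, Urel_mem⟩ : MRel) = Prel * Urel * Prel :=
  (isUPLTriple_MUPL.map_u not_isFactor_Urel_mul_Prel_mul_Urel N).imp
    (congrArg Subtype.val) (congrArg Subtype.val)

/-- every monoid automorphism `N` of `M_UPL` fixing `L` and `P` satisfies
`N(U) = U` or `N(U) = P·U·P`. -/
theorem stmt9 (N : MulAut MUPL)
    (hL : N ⟨Lrel, Lrel_mem⟩ = ⟨Lrel, Lrel_mem⟩)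
    (hP : N ⟨Prel, Prel_mem⟩ = ⟨Prel, Prel_mem⟩) :
    (N ⟨Urel, Urel_mem⟩ : MRel) = Urel ∨
    (N ⟨Urel, Urel_mem⟩ : MRel) = Prel * Urel * Prel :=
  stmt9_general N
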